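/- Let L, T, τ > 0. Let q₀, q₁, q₂, q₃ : [0,T] × ℝ → ℝ be C¹ functions, L-periodic in x, satisfying ∂_t q₀ + ∂_x (q₀²/2) + q₂ + ∂_x q₃ = 0, τ ∂_t q₁ − (∂_x q₂ − q₃) = 0, τ ∂_t q₂ − (∂_x q₁ − q₂) = 0, and τ ∂_t q₃ + (∂_x q₀ − q₁) = 0 on [0,T] × ℝ. Then the energy η(q)(t) = ∫₀^L ( ½ q₀(t,x)² + (τ/2)(q₁(t,x)² + q₂(t,x)² + q₃(t,x)²) ) dx satisfies, for all t ∈ [0,T], d/dt η(q)(t) = ∫₀^L ( −q₀ q₂ − q₂² )(t,x) dx ≤ (1/4) ∫₀^L q₀(t,x)² dx. -/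

import Mathlib

/-! The system carries a local energy balance `∂ₜ e + ∂ₓ f = -q₀ q₂ - q₂²` with flux
`f = q₀³ / 3 + q₀ q₃ - q₁ q₂`: multiply the equations by `q₀, q₁, q₂, q₃` and add. The terms
`q₁ q₃` cancel, and the remaining zeroth-order terms `q₀ q₂` and `q₂²` form the source. Integrating
over a period removes the flux, and completing the square in `q₂` bounds the source by `q₀² / 4`. -/

open MeasureTheory

/-- Partial derivative with respect to the first (time) variable. -/
noncomputable def pdt (u : ℝ → ℝ → ℝ) : ℝ → ℝ → ℝ :=
  fun t x => deriv (fun s => u s x) t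

/-- Partial derivative with respect to the second (space) variable. -/
noncomputable def pdx (u : ℝ → ℝ → ℝ) : ℝ → ℝ → ℝ :=
  fun t x => deriv (fun y => u t y) x

section PartialDerivatives

variable {u : ℝ → ℝ → ℝ} {t x : ℝ}

lemma hasDerivAt_pdt (hu : DifferentiableAt ℝ (Function.uncurry u) (t, x)) :
    HasDerivAt (fun s => u s x) (pdt u t x) t :=
  (hu.comp t (f := fun s => (s, x)) (by fun_prop)).hasDerivAt

lemma hasDerivAt_pdx (hu : DifferentiableAt ℝ (Function.uncurry u) (t, x)) :
    HasDerivAt (u t) (pdx u t x) x :=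
  (hu.comp x (f := fun y => (t, y)) (by fun_prop)).hasDerivAt

lemma pdt_eq_fderiv_apply (hu : DifferentiableAt ℝ (Function.uncurry u) (t, x)) :
    pdt u t x = fderiv ℝ (Function.uncurry u) (t, x) (1, 0) :=
  (hu.hasFDerivAt.comp_hasDerivAt t (f := fun s => (s, x)) ((hasDerivAt_id t).prodMk
    (hasDerivAt_const t x))).deriv

lemma continuous_uncurry_pdt (hu : ContDiff ℝ 1 (Function.uncurry u)) :
    Continuous (Function.uncurry (pdt u)) := by
  have h : Function.uncurry (pdt u) = fun p => fderiv ℝ (Function.uncurry u) p (1, 0) :=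
    funext fun p => pdt_eq_fderiv_apply (hu.differentiable one_ne_zero p)
  rw [h]
  exact (hu.continuous_fderiv one_ne_zero).clm_apply continuous_const

lemma pdx_sq_div_two (hu : DifferentiableAt ℝ (Function.uncurry u) (t, x)) :
    pdx (fun s y => u s y ^ 2 / 2) t x = u t x * pdx u t x :=
  (((hasDerivAt_pdx hu).pow 2).div_const 2 |>.congr_deriv (by push_cast; ring)).deriv

end PartialDerivatives

section Integrals

variable {E : Type*} [NormedAddCommGroup E] [NormedSpace ℝ E]

lemma hasDerivAt_intervalIntegral_of_continuous_deriv {𝕜 : Type*} [RCLike 𝕜] [NormedSpace 𝕜 E]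
    {μ : Measure ℝ} [IsLocallyFiniteMeasure μ] {F F' : 𝕜 → ℝ → E}
    (hF : ∀ s, Continuous (F s)) (hF' : Continuous (Function.uncurry F'))
    (hderiv : ∀ s x, HasDerivAt (fun r => F r x) (F' s x) s) (a b : ℝ) (t : 𝕜) :
    HasDerivAt (fun s => ∫ x in a..b, F s x ∂μ) (∫ x in a..b, F' t x ∂μ) t := by
  have hcompact : IsCompact (Metric.closedBall t 1 ×ˢ Set.uIcc a b) :=
    (isCompact_closedBall t 1).prod isCompact_uIcc
  obtain ⟨C, hC⟩ := hcompact.exists_bound_of_continuousOn hF'.continuousOn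
  exact (intervalIntegral.hasDerivAt_integral_of_dominated_loc_of_deriv_le
    (bound := fun _ => C) (Metric.closedBall_mem_nhds t one_pos)
    (.of_forall fun s => (hF s).aestronglyMeasurable)
    ((hF t).intervalIntegrable _ _)
    (hF'.comp (Continuous.prodMk_right t)).aestronglyMeasurable
    (.of_forall fun x hx s hs => hC (s, x) ⟨hs, Set.uIoc_subset_uIcc hx⟩)
    intervalIntegrable_const
    (.of_forall fun x _ s _ => hderiv s x)).2

lemma intervalIntegral_deriv_eq_zero_of_periodic [CompleteSpace E] {f : ℝ → E} {L : ℝ}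
    (hf : ContDiff ℝ 1 f) (hper : Function.Periodic f L) (a : ℝ) :
    ∫ x in a..a + L, deriv f x = 0 := by
  rw [intervalIntegral.integral_deriv_eq_sub (fun x _ => hf.differentiable one_ne_zero x)
    ((hf.continuous_deriv le_rfl).intervalIntegrable _ _), hper a, sub_self]

lemma hasDerivAt_intervalIntegral_of_balance_law {e : ℝ → ℝ → ℝ} {f σ : ℝ → ℝ} {L t : ℝ}
    (he : ContDiff ℝ 1 (Function.uncurry e)) (hf : ContDiff ℝ 1 f)
    (hper : Function.Periodic f L) (hbalance : ∀ x, pdt e t x + deriv f x = σ x) (a : ℝ) :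
    HasDerivAt (fun s => ∫ x in a..a + L, e s x) (∫ x in a..a + L, σ x) t := by
  have hpdt : Continuous (Function.uncurry (pdt e)) := continuous_uncurry_pdt he
  have hpdt_slice : Continuous (pdt e t) := hpdt.comp (Continuous.prodMk_right t)
  have hsource : ∫ x in a..a + L, σ x = ∫ x in a..a + L, pdt e t x := by
    simp_rw [← hbalance]
    rw [intervalIntegral.integral_add (hpdt_slice.intervalIntegrable _ _)
      ((hf.continuous_deriv le_rfl).intervalIntegrable _ _),
      intervalIntegral_deriv_eq_zero_of_periodic hf hper, add_zero]
  rw [hsource]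
  exact hasDerivAt_intervalIntegral_of_continuous_deriv
    (fun s => he.continuous.comp (Continuous.prodMk_right s)) hpdt
    (fun s x => hasDerivAt_pdt (he.differentiable one_ne_zero (s, x))) a (a + L) t

lemma integral_neg_mul_sub_sq_le {α : Type*} [MeasurableSpace α] {μ : Measure α} {f g : α → ℝ}
    (hf : MemLp f 2 μ) (hg : MemLp g 2 μ) :
    ∫ x, (-f x * g x - g x ^ 2) ∂μ ≤ 1 / 4 * ∫ x, f x ^ 2 ∂μ := by
  rw [← integral_const_mul]
  refine integral_mono ((hf.neg.integrable_mul hg).sub hg.integrable_sq)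
    (hf.integrable_sq.const_mul _) fun x => ?_
  calc -f x * g x - g x ^ 2 = 1 / 4 * f x ^ 2 - (f x / 2 + g x) ^ 2 := by ring
    _ ≤ 1 / 4 * f x ^ 2 := sub_le_self _ (sq_nonneg _)

lemma intervalIntegral_neg_mul_sub_sq_le {a b : ℝ} (hab : a ≤ b) {f g : ℝ → ℝ}
    (hf : Continuous f) (hg : Continuous g) :
    ∫ x in a..b, (-f x * g x - g x ^ 2) ≤ 1 / 4 * ∫ x in a..b, f x ^ 2 := by
  have memLp {h : ℝ → ℝ} (hh : Continuous h) : MemLp h 2 (volume.restrict (Set.Ioc a b)) :=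
    (memLp_two_iff_integrable_sq hh.aestronglyMeasurable).2 (hh.pow 2).integrableOn_Ioc
  simpa only [intervalIntegral.integral_of_le hab] using
    integral_neg_mul_sub_sq_le (memLp hf) (memLp hg)

end Integrals

/-- The hyperbolic approximation of the Kuramoto–Sivashinsky equation with relaxation parameter
`τ`, at the single space-time point `(t, x)`. -/
structure SolvesHyperbolicKSAt (τ : ℝ) (q₀ q₁ q₂ q₃ : ℝ → ℝ → ℝ) (t x : ℝ) : Prop where
  eq₀ : pdt q₀ t x + pdx (fun s y => q₀ s y ^ 2 / 2) t x + q₂ t x + pdx q₃ t x = 0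
  eq₁ : τ * pdt q₁ t x - (pdx q₂ t x - q₃ t x) = 0
  eq₂ : τ * pdt q₂ t x - (pdx q₁ t x - q₂ t x) = 0
  eq₃ : τ * pdt q₃ t x + (pdx q₀ t x - q₁ t x) = 0

/-- The density of the energy `η(q)`, as a function of time and space. -/
noncomputable def energyDensity (τ : ℝ) (q₀ q₁ q₂ q₃ : ℝ → ℝ → ℝ) : ℝ → ℝ → ℝ :=
  fun t x => q₀ t x ^ 2 / 2 + τ / 2 * (q₁ t x ^ 2 + q₂ t x ^ 2 + q₃ t x ^ 2)

/-- The spatial flux in the local balance law of `energyDensity`. -/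
noncomputable def energyFlux (q₀ q₁ q₂ q₃ : ℝ → ℝ → ℝ) : ℝ → ℝ → ℝ :=
  fun t x => q₀ t x ^ 3 / 3 + q₀ t x * q₃ t x - q₁ t x * q₂ t x

section LocalBalance

variable {τ t x : ℝ} {q₀ q₁ q₂ q₃ : ℝ → ℝ → ℝ}

lemma pdt_energyDensity
    (hq₀ : DifferentiableAt ℝ (Function.uncurry q₀) (t, x))
    (hq₁ : DifferentiableAt ℝ (Function.uncurry q₁) (t, x))
    (hq₂ : DifferentiableAt ℝ (Function.uncurry q₂) (t, x))
    (hq₃ : DifferentiableAt ℝ (Function.uncurry q₃) (t, x)) :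
    pdt (energyDensity τ q₀ q₁ q₂ q₃) t x = q₀ t x * pdt q₀ t x +
      τ * (q₁ t x * pdt q₁ t x + q₂ t x * pdt q₂ t x + q₃ t x * pdt q₃ t x) := by
  refine HasDerivAt.deriv ((((hasDerivAt_pdt hq₀).pow 2).div_const 2).add
    (((((hasDerivAt_pdt hq₁).pow 2).add ((hasDerivAt_pdt hq₂).pow 2)).add
      ((hasDerivAt_pdt hq₃).pow 2)).const_mul (τ / 2)) |>.congr_deriv ?_)
  push_cast
  ring

lemma pdx_energyFlux
    (hq₀ : DifferentiableAt ℝ (Function.uncurry q₀) (t, x))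
    (hq₁ : DifferentiableAt ℝ (Function.uncurry q₁) (t, x))
    (hq₂ : DifferentiableAt ℝ (Function.uncurry q₂) (t, x))
    (hq₃ : DifferentiableAt ℝ (Function.uncurry q₃) (t, x)) :
    pdx (energyFlux q₀ q₁ q₂ q₃) t x = q₀ t x ^ 2 * pdx q₀ t x +
      (pdx q₀ t x * q₃ t x + q₀ t x * pdx q₃ t x) -
      (pdx q₁ t x * q₂ t x + q₁ t x * pdx q₂ t x) := by
  refine HasDerivAt.deriv (((((hasDerivAt_pdx hq₀).pow 3).div_const 3).add
    ((hasDerivAt_pdx hq₀).mul (hasDerivAt_pdx hq₃))).sub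
      ((hasDerivAt_pdx hq₁).mul (hasDerivAt_pdx hq₂)) |>.congr_deriv ?_)
  push_cast
  ring

lemma SolvesHyperbolicKSAt.pdt_energyDensity_add_pdx_energyFlux
    (h : SolvesHyperbolicKSAt τ q₀ q₁ q₂ q₃ t x)
    (hq₀ : DifferentiableAt ℝ (Function.uncurry q₀) (t, x))
    (hq₁ : DifferentiableAt ℝ (Function.uncurry q₁) (t, x))
    (hq₂ : DifferentiableAt ℝ (Function.uncurry q₂) (t, x))
    (hq₃ : DifferentiableAt ℝ (Function.uncurry q₃) (t, x)) :
    pdt (energyDensity τ q₀ q₁ q₂ q₃) t x + pdx (energyFlux q₀ q₁ q₂ q₃) t x =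
      -q₀ t x * q₂ t x - q₂ t x ^ 2 := by
  have hadvective : pdt q₀ t x + q₀ t x * pdx q₀ t x + q₂ t x + pdx q₃ t x = 0 :=
    pdx_sq_div_two hq₀ ▸ h.eq₀
  rw [pdt_energyDensity hq₀ hq₁ hq₂ hq₃, pdx_energyFlux hq₀ hq₁ hq₂ hq₃]
  linear_combination q₀ t x * hadvective + q₁ t x * h.eq₁ + q₂ t x * h.eq₂ + q₃ t x * h.eq₃

end LocalBalance

theorem kuramoto_sivashinsky_hyperbolic_energy_growth_general
    {L τ t : ℝ} (hL : 0 ≤ L) {q₀ q₁ q₂ q₃ : ℝ → ℝ → ℝ}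
    (hq₀ : ContDiff ℝ 1 (Function.uncurry q₀))
    (hq₁ : ContDiff ℝ 1 (Function.uncurry q₁))
    (hq₂ : ContDiff ℝ 1 (Function.uncurry q₂))
    (hq₃ : ContDiff ℝ 1 (Function.uncurry q₃))
    (hper₀ : Function.Periodic (q₀ t) L) (hper₁ : Function.Periodic (q₁ t) L)
    (hper₂ : Function.Periodic (q₂ t) L) (hper₃ : Function.Periodic (q₃ t) L)
    (hsol : ∀ x, SolvesHyperbolicKSAt τ q₀ q₁ q₂ q₃ t x) (a : ℝ) :
    HasDerivAt (fun s => ∫ x in a..a + L, energyDensity τ q₀ q₁ q₂ q₃ s x)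
        (∫ x in a..a + L, (-q₀ t x * q₂ t x - q₂ t x ^ 2)) t ∧
      ∫ x in a..a + L, (-q₀ t x * q₂ t x - q₂ t x ^ 2)
        ≤ 1 / 4 * ∫ x in a..a + L, q₀ t x ^ 2 := by
  have slice {u : ℝ → ℝ → ℝ} (hu : ContDiff ℝ 1 (Function.uncurry u)) : ContDiff ℝ 1 (u t) :=
    hu.comp (contDiff_prodMk_right t)
  have hdensity : ContDiff ℝ 1 (Function.uncurry (energyDensity τ q₀ q₁ q₂ q₃)) :=
    ((hq₀.pow 2).div_const 2).add
      (contDiff_const.mul (((hq₁.pow 2).add (hq₂.pow 2)).add (hq₃.pow 2)))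
  have hflux : ContDiff ℝ 1 (energyFlux q₀ q₁ q₂ q₃ t) :=
    ((((slice hq₀).pow 3).div_const 3).add ((slice hq₀).mul (slice hq₃))).sub
      ((slice hq₁).mul (slice hq₂))
  have hflux_per : Function.Periodic (energyFlux q₀ q₁ q₂ q₃ t) L := fun x => by
    simp only [energyFlux, hper₀ x, hper₁ x, hper₂ x, hper₃ x]
  exact ⟨hasDerivAt_intervalIntegral_of_balance_law hdensity hflux hflux_per
      (fun x => (hsol x).pdt_energyDensity_add_pdx_energyFlux
        (hq₀.differentiable one_ne_zero _) (hq₁.differentiable one_ne_zero _)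
        (hq₂.differentiable one_ne_zero _) (hq₃.differentiable one_ne_zero _)) a,
    intervalIntegral_neg_mul_sub_sq_le (le_add_of_nonneg_right hL)
      (slice hq₀).continuous (slice hq₂).continuous⟩

/-- Controlled energy growth for the hyperbolic approximation of the
Kuramoto–Sivashinsky equation:
`d/dt η(q)(t) = ∫₀^L (-q₀ q₂ - q₂²) dx ≤ (1/4) ∫₀^L q₀² dx`. -/
theorem kuramoto_sivashinsky_hyperbolic_energy_growth
    (L T τ : ℝ) (hL : 0 < L) (hT : 0 < T) (hτ : 0 < τ)
    (q₀ q₁ q₂ q₃ : ℝ → ℝ → ℝ)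
    (hq₀ : ContDiff ℝ 1 (Function.uncurry q₀))
    (hq₁ : ContDiff ℝ 1 (Function.uncurry q₁))
    (hq₂ : ContDiff ℝ 1 (Function.uncurry q₂))
    (hq₃ : ContDiff ℝ 1 (Function.uncurry q₃))
    (hper₀ : ∀ t, Function.Periodic (q₀ t) L)
    (hper₁ : ∀ t, Function.Periodic (q₁ t) L)
    (hper₂ : ∀ t, Function.Periodic (q₂ t) L)
    (hper₃ : ∀ t, Function.Periodic (q₃ t) L)
    (heq₀ : ∀ t ∈ Set.Icc (0:ℝ) T, ∀ x : ℝ,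
      pdt q₀ t x + pdx (fun s y => q₀ s y ^ 2 / 2) t x + q₂ t x + pdx q₃ t x = 0)
    (heq₁ : ∀ t ∈ Set.Icc (0:ℝ) T, ∀ x : ℝ,
      τ * pdt q₁ t x - (pdx q₂ t x - q₃ t x) = 0)
    (heq₂ : ∀ t ∈ Set.Icc (0:ℝ) T, ∀ x : ℝ,
      τ * pdt q₂ t x - (pdx q₁ t x - q₂ t x) = 0)
    (heq₃ : ∀ t ∈ Set.Icc (0:ℝ) T, ∀ x : ℝ,
      τ * pdt q₃ t x + (pdx q₀ t x - q₁ t x) = 0) :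
    ∀ t ∈ Set.Icc (0:ℝ) T,
      HasDerivWithinAt
        (fun s => ∫ x in (0:ℝ)..L,
          (q₀ s x ^ 2 / 2 + τ / 2 * (q₁ s x ^ 2 + q₂ s x ^ 2 + q₃ s x ^ 2)))
        (∫ x in (0:ℝ)..L, (- q₀ t x * q₂ t x - q₂ t x ^ 2))
        (Set.Icc (0:ℝ) T) t ∧
      (∫ x in (0:ℝ)..L, (- q₀ t x * q₂ t x - q₂ t x ^ 2))
        ≤ (1 / 4) * ∫ x in (0:ℝ)..L, q₀ t x ^ 2 := by
  intro t ht
  obtain ⟨hderiv, hbound⟩ := kuramoto_sivashinsky_hyperbolic_energy_growth_general hL.le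
    hq₀ hq₁ hq₂ hq₃ (hper₀ t) (hper₁ t) (hper₂ t) (hper₃ t)
    (fun x => ⟨heq₀ t ht x, heq₁ t ht x, heq₂ t ht x, heq₃ t ht x⟩) 0
  rw [zero_add] at hderiv hbound
  exact ⟨hderiv.hasDerivWithinAt, hbound⟩
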